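/- arXiv:1712.04150 — 2 statements merged into one kernel-verified Lean document; each statement's English description precedes it below -/
import Mathlib

section
/- Let Ω ⊆ ℝ^d be a Lebesgue-measurable set, let Δt > 0 and K ≥ 0 satisfy K·Δt ≤ 1/2, and let f : ℝ^d → ℝ^d be a map that is differentiable at every point of Ω, injective on Ω, maps Ω onto Ω, and satisfies det(Df(x)) ≥ 1 − K·Δt for every x ∈ Ω. Then for every measurable function v : ℝ^d → ℝ^m one has ∫_Ω ‖v(f(x))‖² dx ≤ (1 + 2·K·Δt) · ∫_Ω ‖v(y)‖² dy, where the integrals are taken with respect to Lebesgue measure. -/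
open MeasureTheory

theorem one_le_one_add_two_mul_mul_one_sub {δ : ℝ} (hδ₀ : 0 ≤ δ) (hδ : δ ≤ 1 / 2) :
    1 ≤ (1 + 2 * δ) * (1 - δ) := by
  have hgap : 0 ≤ δ * (1 - 2 * δ) := mul_nonneg hδ₀ (by linarith)
  linarith

section ChangeOfVariables

variable {E : Type*} [NormedAddCommGroup E] [NormedSpace ℝ E] [FiniteDimensional ℝ E]
  [MeasurableSpace E] [BorelSpace E] (μ : Measure E) [μ.IsAddHaarMeasure]
  {s t : Set E} {f : E → E} {f' : E → E →L[ℝ] E}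

theorem ofReal_mul_setLIntegral_comp_le_setLIntegral_image {c : ℝ} (hs : MeasurableSet s)
    (hf' : ∀ x ∈ s, HasFDerivWithinAt f (f' x) s x) (hinj : Set.InjOn f s)
    (hdet : ∀ x ∈ s, c ≤ |(f' x).det|) (g : E → ENNReal) :
    ENNReal.ofReal c * ∫⁻ x in s, g (f x) ∂μ ≤ ∫⁻ y in f '' s, g y ∂μ := by
  calc
    ENNReal.ofReal c * ∫⁻ x in s, g (f x) ∂μ
      = ∫⁻ x in s, ENNReal.ofReal c * g (f x) ∂μ :=
        (lintegral_const_mul' _ _ ENNReal.ofReal_ne_top).symm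
    _ ≤ ∫⁻ x in s, ENNReal.ofReal |(f' x).det| * g (f x) ∂μ :=
        setLIntegral_mono' hs fun x hx ↦ by gcongr; exact hdet x hx
    _ = ∫⁻ y in f '' s, g y ∂μ :=
        (lintegral_image_eq_lintegral_abs_det_fderiv_mul μ hs hf' hinj g).symm

theorem ofReal_mul_setLIntegral_comp_le_of_mapsTo {c : ℝ} (hs : NullMeasurableSet s μ)
    (hf' : ∀ x ∈ s, HasFDerivWithinAt f (f' x) s x) (hinj : Set.InjOn f s)
    (hmaps : Set.MapsTo f s t) (hdet : ∀ x ∈ s, c ≤ |(f' x).det|) (g : E → ENNReal) :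
    ENNReal.ofReal c * ∫⁻ x in s, g (f x) ∂μ ≤ ∫⁻ y in t, g y ∂μ := by
  -- Passing to a measurable subset of full measure can only shrink the image, so the inequality
  -- survives without knowing that `f` maps null sets to null sets.
  obtain ⟨u, hus, hu, hu_ae⟩ := hs.exists_measurable_subset_ae_eq
  calc
    ENNReal.ofReal c * ∫⁻ x in s, g (f x) ∂μ
      = ENNReal.ofReal c * ∫⁻ x in u, g (f x) ∂μ := by rw [setLIntegral_congr hu_ae]
    _ ≤ ∫⁻ y in f '' u, g y ∂μ :=
        ofReal_mul_setLIntegral_comp_le_setLIntegral_image μ hu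
          (fun x hx ↦ (hf' x (hus hx)).mono hus) (hinj.mono hus) (fun x hx ↦ hdet x (hus hx)) g
    _ ≤ ∫⁻ y in t, g y ∂μ := lintegral_mono_set (hmaps.mono_left hus).image_subset

theorem sq_norm_comp_integral_le_general {δ : ℝ} (hδ₀ : 0 ≤ δ) (hδ : δ ≤ 1 / 2)
    (hs : NullMeasurableSet s μ) (hf' : ∀ x ∈ s, HasFDerivWithinAt f (f' x) s x)
    (hinj : Set.InjOn f s) (hmaps : Set.MapsTo f s t) (hdet : ∀ x ∈ s, 1 - δ ≤ |(f' x).det|)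
    (g : E → ENNReal) :
    ∫⁻ x in s, g (f x) ∂μ ≤ ENNReal.ofReal (1 + 2 * δ) * ∫⁻ y in t, g y ∂μ := by
  have hfactor : 1 ≤ ENNReal.ofReal (1 + 2 * δ) * ENNReal.ofReal (1 - δ) := by
    rw [← ENNReal.ofReal_mul (by linarith), ENNReal.one_le_ofReal]
    exact one_le_one_add_two_mul_mul_one_sub hδ₀ hδ
  calc
    ∫⁻ x in s, g (f x) ∂μ
      ≤ ENNReal.ofReal (1 + 2 * δ) * ENNReal.ofReal (1 - δ) * ∫⁻ x in s, g (f x) ∂μ :=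
        le_mul_of_one_le_left' hfactor
    _ = ENNReal.ofReal (1 + 2 * δ) * (ENNReal.ofReal (1 - δ) * ∫⁻ x in s, g (f x) ∂μ) :=
        mul_assoc _ _ _
    _ ≤ ENNReal.ofReal (1 + 2 * δ) * ∫⁻ y in t, g y ∂μ := by
        gcongr
        exact ofReal_mul_setLIntegral_comp_le_of_mapsTo μ hs hf' hinj hmaps hdet g

end ChangeOfVariables

/-- Abstract change-of-variables stability bound: if `f` maps a measurable set `Ω`
bijectively onto itself, is differentiable on `Ω`, and its Jacobian determinant
is bounded below by `1 - K·Δt` with `K·Δt ≤ 1/2`, then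
`∫_Ω ‖v(f(x))‖² dx ≤ (1 + 2·K·Δt) ∫_Ω ‖v(y)‖² dy`. -/
theorem sq_norm_comp_integral_le (d m : ℕ)
    (Ω : Set (EuclideanSpace ℝ (Fin d))) (hΩ : MeasurableSet Ω)
    (Δt K : ℝ) (hΔt : 0 < Δt) (hK : 0 ≤ K) (hKΔt : K * Δt ≤ 1 / 2)
    (f : EuclideanSpace ℝ (Fin d) → EuclideanSpace ℝ (Fin d))
    (hf : ∀ x ∈ Ω, DifferentiableAt ℝ f x)
    (hinj : Set.InjOn f Ω) (honto : f '' Ω = Ω)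
    (hdet : ∀ x ∈ Ω, 1 - K * Δt ≤ LinearMap.det (fderiv ℝ f x).toLinearMap)
    (v : EuclideanSpace ℝ (Fin d) → EuclideanSpace ℝ (Fin m)) (hv : Measurable v) :
    ∫⁻ x in Ω, (‖v (f x)‖₊ : ENNReal) ^ 2 ≤
      ENNReal.ofReal (1 + 2 * K * Δt) * ∫⁻ y in Ω, (‖v y‖₊ : ENNReal) ^ 2 := by
  simpa only [mul_assoc] using sq_norm_comp_integral_le_general volume (mul_nonneg hK hΔt.le) hKΔt
    hΩ.nullMeasurableSet (fun x hx ↦ (hf x hx).hasFDerivAt.hasFDerivWithinAt) hinj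
    (Set.mapsTo_iff_image_subset.mpr honto.subset)
    (fun x hx ↦ (hdet x hx).trans (le_abs_self _)) (fun y ↦ (‖v y‖₊ : ENNReal) ^ 2)
end

section
/- Let d = 2 or d = 3, let Δt > 0 and L ≥ 0 satisfy Δt·L ≤ 1/4, and let w₁, w₂ : ℝ^d → ℝ^d be everywhere-differentiable maps whose Jacobian matrices have Frobenius norm at most L at every point. Let v : ℝ^d → ℝ^m be continuously differentiable with compact support. Then (∫_{ℝ^d} ‖v(x − Δt·w₁(x)) − v(x − Δt·w₂(x))‖² dx)^{1/2} ≤ √2 · Δt · (sup_{x ∈ ℝ^d} ‖w₁(x) − w₂(x)‖) · (∫_{ℝ^d} ‖Dv(y)‖_F² dy)^{1/2}, where ‖Dv(y)‖_F is the Frobenius norm of the Jacobian matrix of v at y and all integrals are with respect to Lebesgue measure. -/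
open MeasureTheory

/-- The Frobenius norm of the Jacobian matrix of `f` at `x`. -/
noncomputable def jacobianFrobeniusNorm {d m : ℕ}
    (f : EuclideanSpace ℝ (Fin d) → EuclideanSpace ℝ (Fin m))
    (x : EuclideanSpace ℝ (Fin d)) : ℝ :=
  Real.sqrt (∑ i, ∑ j, (fderiv ℝ f x (EuclideanSpace.single j (1 : ℝ)) i) ^ 2)

/-!
On the segment joining the two characteristic maps every map has the form `x ↦ x - u x`, where the
Jacobian matrix `B` of `u` has Frobenius norm at most `r = Δt * L < 1`. Such a map is injective, and
`|det (1 - B)|⁻¹ = |det (∑ i, B ^ i)|` is at most `K = (1 + r / ((1 - r) * √d)) ^ d`, because AM-GM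
for the eigenvalues of `Aᵀ * A` gives `|det A| ≤ (‖A‖ / √d) ^ d`. By the change of variables
formula, the map pushes Lebesgue measure to at most `K` times itself. Writing the difference of the
compositions as an integral of `Dv` along the segment, Jensen and Tonelli then give the `L^q`
estimate with constant `K ^ (1 / q) * Δt`; finally `K ≤ 2` for `d ≤ 4` and `r ≤ 1 / 4`.
-/

open AffineMap Set
open scoped ENNReal Matrix.Norms.Frobenius

section Determinant

variable {ι 𝕜 : Type*}

lemma prod_le_mean_pow_card (s : Finset ι) {z : ι → ℝ} (hz : ∀ i ∈ s, 0 ≤ z i) :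
    ∏ i ∈ s, z i ≤ ((∑ i ∈ s, z i) / s.card) ^ s.card := by
  obtain rfl | hs := s.eq_empty_or_nonempty
  · simp
  have hcard : (0 : ℝ) < s.card := by exact_mod_cast hs.card_pos
  have hgeom : (∏ i ∈ s, z i) ^ (s.card : ℝ)⁻¹ ≤ (∑ i ∈ s, z i) / s.card := by
    simpa using Real.geom_mean_le_arith_mean s 1 z (by simp) (by simpa using hcard) hz
  rw [← Real.rpow_natCast]
  exact (Real.rpow_inv_le_iff_of_pos (Finset.prod_nonneg hz)
    (div_nonneg (Finset.sum_nonneg hz) hcard.le) hcard).1 hgeom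

variable [Fintype ι] [RCLike 𝕜]

lemma trace_conjTranspose_mul_self_eq_norm_sq {κ : Type*} [Fintype κ] (A : Matrix κ ι 𝕜) :
    (A.conjTranspose * A).trace = (‖A‖ : 𝕜) ^ 2 := by
  have hsq : ‖A‖ ^ 2 = ∑ i, ∑ j, ‖A i j‖ ^ 2 := by
    rw [Matrix.frobenius_norm_def, ← Real.sqrt_eq_rpow, Real.sq_sqrt (by positivity)]
    simp only [Real.rpow_two]
  rw [← RCLike.ofReal_pow, hsq, Finset.sum_comm]
  simp [Matrix.trace, Matrix.mul_apply, RCLike.conj_mul]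

variable [DecidableEq ι]

lemma norm_det_le_norm_div_sqrt_card_pow (A : Matrix ι ι 𝕜) :
    ‖A.det‖ ≤ (‖A‖ / √(Fintype.card ι)) ^ Fintype.card ι := by
  have hA := Matrix.isHermitian_conjTranspose_mul_self A
  have hprod : ‖A.det‖ ^ 2 = ∏ i, hA.eigenvalues i := by
    have h := hA.det_eq_prod_eigenvalues
    rw [Matrix.det_mul, Matrix.det_conjTranspose, RCLike.star_def, RCLike.conj_mul] at h
    exact_mod_cast h
  have hsum : ∑ i, hA.eigenvalues i = ‖A‖ ^ 2 := by
    have h := hA.trace_eq_sum_eigenvalues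
    rw [trace_conjTranspose_mul_self_eq_norm_sq] at h
    exact_mod_cast h.symm
  refine le_of_sq_le_sq ?_ (by positivity)
  calc ‖A.det‖ ^ 2 ≤ (‖A‖ ^ 2 / Fintype.card ι) ^ Fintype.card ι := by
        rw [hprod, ← hsum]
        exact prod_le_mean_pow_card _
          fun i _ => A.eigenvalues_conjTranspose_mul_self_nonneg i
    _ = ((‖A‖ / √(Fintype.card ι)) ^ Fintype.card ι) ^ 2 := by
        rw [pow_right_comm, div_pow ‖A‖, Real.sq_sqrt (Nat.cast_nonneg _)]

/-- An upper bound for `|det (1 - B)|⁻¹` when `B` is an `n × n` matrix of Frobenius norm at most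
`r < 1`. The value at `n = 0` is `1`, in spite of the division by `√0`. -/
noncomputable def invDetBound (n : ℕ) (r : ℝ) : ℝ :=
  (1 + r / ((1 - r) * √n)) ^ n

lemma invDetBound_nonneg (n : ℕ) {r : ℝ} (hr : 0 ≤ r) (hr' : r < 1) : 0 ≤ invDetBound n r := by
  have := sub_pos.2 hr'
  unfold invDetBound
  positivity

lemma invDetBound_le_invDetBound (n : ℕ) {r s : ℝ} (hr : 0 ≤ r) (hrs : r ≤ s) (hs : s < 1) :
    invDetBound n r ≤ invDetBound n s := by
  have := sub_pos.2 hs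
  have := sub_pos.2 (hrs.trans_lt hs)
  have := hr.trans hrs
  obtain rfl | hn := n.eq_zero_or_pos
  · simp [invDetBound]
  unfold invDetBound
  gcongr

lemma invDetBound_le_two {n : ℕ} (hn : n ≤ 4) {r : ℝ} (hr : 0 ≤ r) (hr' : r ≤ 1 / 4) :
    invDetBound n r ≤ 2 := by
  refine (invDetBound_le_invDetBound n hr hr' (by norm_num)).trans ?_
  have bound {c : ℝ} (hc : 0 < c) (hcn : c ^ 2 ≤ n) :
      invDetBound n (1 / 4) ≤ (1 + 1 / (3 * c)) ^ n := by
    have hcn' : c ≤ √n := Real.le_sqrt_of_sq_le hcn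
    have hbase : (1 / 4 : ℝ) / ((1 - 1 / 4) * √n) = 1 / (3 * √n) := by
      field_simp
      norm_num
    rw [invDetBound, hbase]
    gcongr
  interval_cases n
  · norm_num [invDetBound]
  · exact (bound (c := 1) (by norm_num) (by norm_num)).trans (by norm_num)
  · exact (bound (c := 1) (by norm_num) (by norm_num)).trans (by norm_num)
  · exact (bound (c := 3 / 2) (by norm_num) (by norm_num)).trans (by norm_num)
  · exact (bound (c := 2) (by norm_num) (by norm_num)).trans (by norm_num)

lemma one_le_invDetBound_mul_norm_det_one_sub {B : Matrix ι ι 𝕜} (hB : ‖B‖ < 1) :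
    1 ≤ invDetBound (Fintype.card ι) ‖B‖ * ‖(1 - B).det‖ := by
  have : CompleteSpace (Matrix ι ι 𝕜) := FiniteDimensional.complete 𝕜 _
  set M := ∑' i : ℕ, B ^ i
  have hM_mul : M * (1 - B) = 1 := geom_series_mul_neg B hB
  have hinv : M.det * (1 - B).det = 1 := by rw [← Matrix.det_mul, hM_mul, Matrix.det_one]
  have hone : ‖(1 : Matrix ι ι 𝕜)‖ = √(Fintype.card ι) := by
    simpa using congrArg NNReal.toReal (Matrix.frobenius_nnnorm_one (n := ι) (α := 𝕜))
  have hM : ‖M‖ ≤ √(Fintype.card ι) + ‖B‖ / (1 - ‖B‖) := by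
    calc ‖M‖ ≤ ‖(1 : Matrix ι ι 𝕜)‖ - 1 + (1 - ‖B‖)⁻¹ := tsum_geometric_le_of_norm_lt_one B hB
      _ = √(Fintype.card ι) + ‖B‖ / (1 - ‖B‖) := by
        have := (sub_pos.2 hB).ne'
        rw [hone]
        field_simp
        ring
  have hdet : ‖M.det‖ ≤ invDetBound (Fintype.card ι) ‖B‖ := by
    refine (norm_det_le_norm_div_sqrt_card_pow M).trans ?_
    obtain hι | hι := (Fintype.card ι).eq_zero_or_pos
    · simp [invDetBound, hι]
    calc (‖M‖ / √(Fintype.card ι)) ^ Fintype.card ι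
        ≤ ((√(Fintype.card ι) + ‖B‖ / (1 - ‖B‖)) / √(Fintype.card ι)) ^ Fintype.card ι := by
          gcongr
      _ = invDetBound (Fintype.card ι) ‖B‖ := by
          rw [invDetBound, add_div, div_self (by positivity), div_div]
  calc (1 : ℝ) = ‖M.det‖ * ‖(1 - B).det‖ := by rw [← norm_mul, hinv, norm_one]
    _ ≤ invDetBound (Fintype.card ι) ‖B‖ * ‖(1 - B).det‖ := by gcongr

end Determinant

section JacobianMatrix

lemma norm_toEuclideanLin_apply_le {ι κ 𝕜 : Type*} [Fintype ι] [Fintype κ] [DecidableEq ι]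
    [RCLike 𝕜] (A : Matrix κ ι 𝕜) (x : EuclideanSpace 𝕜 ι) :
    ‖A.toEuclideanLin x‖ ≤ ‖A‖ * ‖x‖ := by
  have h := Matrix.frobenius_norm_mul A (Matrix.replicateCol Unit x.ofLp)
  rwa [← Matrix.replicateCol_mulVec, Matrix.frobenius_norm_replicateCol,
    Matrix.frobenius_norm_replicateCol] at h

variable {d m : ℕ} {f g : EuclideanSpace ℝ (Fin d) → EuclideanSpace ℝ (Fin m)}
  {x : EuclideanSpace ℝ (Fin d)}

/-- The Jacobian matrix of `f` at `x` in the standard bases. -/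
noncomputable def jacobianMatrix (f : EuclideanSpace ℝ (Fin d) → EuclideanSpace ℝ (Fin m))
    (x : EuclideanSpace ℝ (Fin d)) : Matrix (Fin m) (Fin d) ℝ :=
  Matrix.toEuclideanLin.symm (fderiv ℝ f x)

lemma toEuclideanLin_jacobianMatrix : (jacobianMatrix f x).toEuclideanLin = fderiv ℝ f x :=
  LinearEquiv.apply_symm_apply _ _

lemma norm_jacobianMatrix : ‖jacobianMatrix f x‖ = jacobianFrobeniusNorm f x := by
  have hentry (i j) : jacobianMatrix f x i j = fderiv ℝ f x (EuclideanSpace.single j 1) i := by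
    rw [← ContinuousLinearMap.coe_coe, ← toEuclideanLin_jacobianMatrix]
    simp
  simp [Matrix.frobenius_norm_def, jacobianFrobeniusNorm, Real.sqrt_eq_rpow, hentry]

lemma norm_fderiv_le_jacobianFrobeniusNorm : ‖fderiv ℝ f x‖ ≤ jacobianFrobeniusNorm f x := by
  refine ContinuousLinearMap.opNorm_le_bound _ (Real.sqrt_nonneg _) fun u => ?_
  rw [← ContinuousLinearMap.coe_coe, ← toEuclideanLin_jacobianMatrix, ← norm_jacobianMatrix]
  exact norm_toEuclideanLin_apply_le _ u

lemma det_id_sub_fderiv {u : EuclideanSpace ℝ (Fin d) → EuclideanSpace ℝ (Fin d)} :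
    (ContinuousLinearMap.id ℝ (EuclideanSpace ℝ (Fin d)) - fderiv ℝ u x).det =
      (1 - jacobianMatrix u x).det := by
  rw [ContinuousLinearMap.det, ContinuousLinearMap.toLinearMap_sub,
    ← toEuclideanLin_jacobianMatrix, ContinuousLinearMap.coe_id,
    ← LinearMap.det_toMatrix (EuclideanSpace.basisFun (Fin d) ℝ).toBasis, map_sub,
    LinearMap.toMatrix_id, Matrix.toEuclideanLin_eq_toLin_orthonormal, LinearMap.toMatrix_toLin]

lemma jacobianFrobeniusNorm_const_smul (c : ℝ) :
    jacobianFrobeniusNorm (c • f) x = |c| * jacobianFrobeniusNorm f x := by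
  simp only [← norm_jacobianMatrix, jacobianMatrix, fderiv_const_smul_field,
    Pi.smul_apply, ContinuousLinearMap.toLinearMap_smul, map_smul, norm_smul, Real.norm_eq_abs]

lemma jacobianFrobeniusNorm_lineMap_le {r s : ℝ} (hf : DifferentiableAt ℝ f x)
    (hg : DifferentiableAt ℝ g x) (hfr : jacobianFrobeniusNorm f x ≤ r)
    (hgr : jacobianFrobeniusNorm g x ≤ r) (hs : s ∈ Icc (0 : ℝ) 1) :
    jacobianFrobeniusNorm (lineMap f g s) x ≤ r := by
  have hlin : jacobianMatrix (lineMap f g s) x =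
      lineMap (jacobianMatrix f x) (jacobianMatrix g x) s := by
    simp only [lineMap_apply_module, jacobianMatrix]
    rw [fderiv_add (hf.const_smul _) (hg.const_smul _), fderiv_const_smul_field,
      fderiv_const_smul_field]
    simp
  simp only [← norm_jacobianMatrix, ← mem_closedBall_zero_iff] at hfr hgr ⊢
  rw [hlin]
  exact (convex_closedBall _ _).lineMap_mem hfr hgr hs

end JacobianMatrix

section Pushforward

lemma map_le_smul_of_one_le_mul_abs_det {E : Type*} [NormedAddCommGroup E] [NormedSpace ℝ E]
    [FiniteDimensional ℝ E] [MeasurableSpace E] [BorelSpace E] (μ : Measure E)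
    [μ.IsAddHaarMeasure] {f : E → E} {f' : E → E →L[ℝ] E} {K : ℝ}
    (hf' : ∀ x, HasFDerivAt f (f' x) x) (hf : Function.Injective f)
    (hK : ∀ x, 1 ≤ K * |(f' x).det|) :
    μ.map f ≤ ENNReal.ofReal K • μ := by
  have hfm : Measurable f :=
    (continuous_iff_continuousAt.2 fun x => (hf' x).continuousAt).measurable
  refine Measure.le_iff.2 fun s hs => ?_
  calc μ.map f s = ∫⁻ _ in f ⁻¹' s, 1 ∂μ := by rw [Measure.map_apply hfm hs, setLIntegral_one]
    _ ≤ ∫⁻ x in f ⁻¹' s, ENNReal.ofReal K * ENNReal.ofReal |(f' x).det| ∂μ := by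
        refine lintegral_mono fun x => ?_
        rw [← ENNReal.ofReal_mul' (abs_nonneg _)]
        exact ENNReal.one_le_ofReal.2 (hK x)
    _ = ENNReal.ofReal K * μ (f '' (f ⁻¹' s)) := by
        rw [lintegral_const_mul' _ _ ENNReal.ofReal_ne_top,
          lintegral_abs_det_fderiv_eq_addHaar_image μ (hfm hs)
            (fun x _ => (hf' x).hasFDerivWithinAt) hf.injOn]
    _ ≤ (ENNReal.ofReal K • μ) s := by
        rw [Measure.smul_apply, smul_eq_mul]
        gcongr
        exact image_preimage_subset f s

lemma injective_id_sub_of_norm_fderiv_le {E : Type*} [NormedAddCommGroup E] [NormedSpace ℝ E]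
    {u : E → E} {r : ℝ} (hu : Differentiable ℝ u) (hr : r < 1) (hur : ∀ x, ‖fderiv ℝ u x‖ ≤ r) :
    Function.Injective fun x => x - u x := by
  have hr₀ : 0 ≤ r := (norm_nonneg _).trans (hur 0)
  lift r to NNReal using hr₀
  have hlip : LipschitzWith r u := lipschitzWith_of_nnnorm_fderiv_le hu hur
  have hanti : AntilipschitzWith (1 - r)⁻¹ fun x => x - u x := by
    simpa [sub_eq_add_neg] using
      AntilipschitzWith.id.add_lipschitzWith hlip.neg (by simpa using hr)
  exact hanti.injective

lemma map_id_sub_le_invDetBound_smul {d : ℕ}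
    {u : EuclideanSpace ℝ (Fin d) → EuclideanSpace ℝ (Fin d)} {r : ℝ}
    (hu : Differentiable ℝ u) (hr : r < 1) (hur : ∀ x, jacobianFrobeniusNorm u x ≤ r) :
    (volume.map fun x => x - u x) ≤ ENNReal.ofReal (invDetBound d r) • volume := by
  refine map_le_smul_of_one_le_mul_abs_det volume
    (fun x => (hasFDerivAt_id x).fun_sub (hu x).hasFDerivAt)
    (injective_id_sub_of_norm_fderiv_le hu hr
      fun x => norm_fderiv_le_jacobianFrobeniusNorm.trans (hur x)) fun x => ?_
  rw [det_id_sub_fderiv]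
  have hnorm : ‖jacobianMatrix u x‖ ≤ r := norm_jacobianMatrix.trans_le (hur x)
  calc (1 : ℝ) ≤ invDetBound d ‖jacobianMatrix u x‖ * |(1 - jacobianMatrix u x).det| := by
        simpa using one_le_invDetBound_mul_norm_det_one_sub (hnorm.trans_lt hr)
    _ ≤ invDetBound d r * |(1 - jacobianMatrix u x).det| := by
        gcongr
        exact invDetBound_le_invDetBound d (norm_nonneg _) hnorm hr

lemma map_lineMap_id_sub_le_invDetBound_smul {d : ℕ}
    {u₁ u₂ : EuclideanSpace ℝ (Fin d) → EuclideanSpace ℝ (Fin d)} {r s : ℝ}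
    (hu₁ : Differentiable ℝ u₁) (hu₂ : Differentiable ℝ u₂) (hr : r < 1)
    (hur₁ : ∀ x, jacobianFrobeniusNorm u₁ x ≤ r) (hur₂ : ∀ x, jacobianFrobeniusNorm u₂ x ≤ r)
    (hs : s ∈ Icc (0 : ℝ) 1) :
    volume.map (lineMap (fun x => x - u₁ x) (fun x => x - u₂ x) s) ≤
      ENNReal.ofReal (invDetBound d r) • volume := by
  have hline : lineMap (fun x => x - u₁ x) (fun x => x - u₂ x) s =
      fun x => x - lineMap u₁ u₂ s x := by
    ext1 x
    simp only [lineMap_apply_module, Pi.add_apply, Pi.smul_apply]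
    module
  have hdiff : Differentiable ℝ (lineMap u₁ u₂ s) := by
    rw [lineMap_apply_module]
    exact (hu₁.const_smul _).add (hu₂.const_smul _)
  rw [hline]
  exact map_id_sub_le_invDetBound_smul hdiff hr fun x =>
    jacobianFrobeniusNorm_lineMap_le (hu₁ x) (hu₂ x) (hur₁ x) (hur₂ x) hs

end Pushforward

section CompositionDifference

variable {E F : Type*} [NormedAddCommGroup E] [NormedSpace ℝ E] [NormedAddCommGroup F]
  [NormedSpace ℝ F] {v : E → F} {q : ℝ}

lemma rpow_lintegral_le_lintegral_rpow {α : Type*} [MeasurableSpace α] (μ : Measure α)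
    [IsProbabilityMeasure μ] {f : α → ℝ≥0∞} (hf : AEMeasurable f μ) (hq : 1 ≤ q) :
    (∫⁻ a, f a ∂μ) ^ q ≤ ∫⁻ a, f a ^ q ∂μ := by
  have h := eLpNorm'_le_eLpNorm'_of_exponent_le one_pos hq μ hf.aestronglyMeasurable
  simp only [eLpNorm', enorm_eq_self, ENNReal.rpow_one, one_div, inv_one] at h
  exact (ENNReal.le_rpow_inv_iff (by positivity)).1 h

lemma rpow_enorm_sub_le_lintegral_fderiv (hv : ContDiff ℝ 1 v) (hq : 1 ≤ q) (x y : E) :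
    ‖v y - v x‖ₑ ^ q ≤
      ‖y - x‖ₑ ^ q * ∫⁻ s in Icc (0 : ℝ) 1, ‖fderiv ℝ v (lineMap x y s)‖ₑ ^ q := by
  have hq₀ : 0 ≤ q := zero_le_one.trans hq
  have : IsProbabilityMeasure (volume.restrict (Icc (0 : ℝ) 1)) := ⟨by simp⟩
  have hcurve : ContDiff ℝ 1 fun s : ℝ => v (lineMap x y s) := by
    simp only [lineMap_apply_module]
    fun_prop
  have hderiv (s : ℝ) :
      deriv (fun s => v (lineMap x y s)) s = fderiv ℝ v (lineMap x y s) (y - x) :=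
    ((hv.differentiable one_ne_zero _).hasFDerivAt.comp_hasDerivAt s hasDerivAt_lineMap).deriv
  have hftc : ‖v y - v x‖ₑ ≤ ∫⁻ s in Icc (0 : ℝ) 1, ‖deriv (fun s => v (lineMap x y s)) s‖ₑ := by
    simpa using enorm_sub_le_lintegral_deriv_of_contDiffOn_Icc hcurve.contDiffOn zero_le_one
  calc ‖v y - v x‖ₑ ^ q
      ≤ (∫⁻ s in Icc (0 : ℝ) 1, ‖deriv (fun s => v (lineMap x y s)) s‖ₑ) ^ q := by gcongr
    _ ≤ ∫⁻ s in Icc (0 : ℝ) 1, ‖deriv (fun s => v (lineMap x y s)) s‖ₑ ^ q :=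
        rpow_lintegral_le_lintegral_rpow _
          (hcurve.continuous_deriv le_rfl).enorm.measurable.aemeasurable hq
    _ ≤ ∫⁻ s in Icc (0 : ℝ) 1, ‖y - x‖ₑ ^ q * ‖fderiv ℝ v (lineMap x y s)‖ₑ ^ q := by
        refine lintegral_mono fun s => ?_
        rw [hderiv, ← ENNReal.mul_rpow_of_nonneg _ _ hq₀, mul_comm]
        gcongr
        exact ContinuousLinearMap.le_opENorm _ _
    _ = ‖y - x‖ₑ ^ q * ∫⁻ s in Icc (0 : ℝ) 1, ‖fderiv ℝ v (lineMap x y s)‖ₑ ^ q :=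
        lintegral_const_mul' _ _ (ENNReal.rpow_ne_top_of_nonneg hq₀ enorm_ne_top)

theorem lintegral_rpow_enorm_comp_sub_comp_le [MeasurableSpace E] [BorelSpace E]
    [SecondCountableTopology E] {α : Type*} [MeasurableSpace α] {μ : Measure α} [SFinite μ]
    {ν : Measure E} {K : ℝ≥0∞} {X Y : α → E} (hX : Measurable X) (hY : Measurable Y)
    (hmap : ∀ s ∈ Icc (0 : ℝ) 1, μ.map (lineMap X Y s) ≤ K • ν)
    (hv : ContDiff ℝ 1 v) (hq : 1 ≤ q) :
    ∫⁻ a, ‖v (Y a) - v (X a)‖ₑ ^ q ∂μ ≤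
      K * (⨆ a, ‖Y a - X a‖ₑ) ^ q * ∫⁻ y, ‖fderiv ℝ v y‖ₑ ^ q ∂ν := by
  set S := ⨆ a, ‖Y a - X a‖ₑ
  have hG : Measurable fun y => ‖fderiv ℝ v y‖ₑ ^ q :=
    (hv.continuous_fderiv one_ne_zero).enorm.measurable.pow_const q
  have hline : Measurable fun p : α × ℝ => lineMap (X p.1) (Y p.1) p.2 := by
    simp only [lineMap_apply_module]
    fun_prop
  have hGline : Measurable fun p : α × ℝ => ‖fderiv ℝ v (lineMap (X p.1) (Y p.1) p.2)‖ₑ ^ q :=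
    hG.comp hline
  have hpush (s : ℝ) (hs : s ∈ Icc (0 : ℝ) 1) :
      ∫⁻ a, ‖fderiv ℝ v (lineMap (X a) (Y a) s)‖ₑ ^ q ∂μ ≤ K * ∫⁻ y, ‖fderiv ℝ v y‖ₑ ^ q ∂ν := by
    have hXY : lineMap X Y s = fun a => lineMap (X a) (Y a) s := by
      ext1 a
      simp [lineMap_apply_module]
    have hXYm : Measurable fun a => lineMap (X a) (Y a) s :=
      (hline.comp (measurable_prodMk_right (y := s)) :)
    have h := lintegral_mono' (hmap s hs) (le_refl fun y => ‖fderiv ℝ v y‖ₑ ^ q)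
    rwa [hXY, lintegral_map hG hXYm, lintegral_smul_measure, smul_eq_mul] at h
  calc ∫⁻ a, ‖v (Y a) - v (X a)‖ₑ ^ q ∂μ
      ≤ ∫⁻ a, S ^ q * (∫⁻ s in Icc (0 : ℝ) 1, ‖fderiv ℝ v (lineMap (X a) (Y a) s)‖ₑ ^ q) ∂μ := by
        refine lintegral_mono fun a => (rpow_enorm_sub_le_lintegral_fderiv hv hq _ _).trans ?_
        gcongr
        exact le_iSup (fun a => ‖Y a - X a‖ₑ) a
    _ = S ^ q * ∫⁻ s in Icc (0 : ℝ) 1, ∫⁻ a, ‖fderiv ℝ v (lineMap (X a) (Y a) s)‖ₑ ^ q ∂μ := by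
        rw [lintegral_const_mul _ hGline.lintegral_prod_right',
          lintegral_lintegral_swap hGline.aemeasurable]
    _ ≤ S ^ q * ∫⁻ _ in Icc (0 : ℝ) 1, K * ∫⁻ y, ‖fderiv ℝ v y‖ₑ ^ q ∂ν := by
        gcongr S ^ q * ?_
        exact setLIntegral_mono measurable_const hpush
    _ = K * S ^ q * ∫⁻ y, ‖fderiv ℝ v y‖ₑ ^ q ∂ν := by
        rw [setLIntegral_const, Real.volume_Icc, sub_zero, ENNReal.ofReal_one, mul_one]
        ring

theorem lintegral_rpow_enorm_comp_id_sub_sub_comp_id_sub_le {d : ℕ}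
    {u₁ u₂ : EuclideanSpace ℝ (Fin d) → EuclideanSpace ℝ (Fin d)} {r : ℝ}
    (hu₁ : Differentiable ℝ u₁) (hu₂ : Differentiable ℝ u₂) (hr : r < 1)
    (hur₁ : ∀ x, jacobianFrobeniusNorm u₁ x ≤ r) (hur₂ : ∀ x, jacobianFrobeniusNorm u₂ x ≤ r)
    {v : EuclideanSpace ℝ (Fin d) → F} (hv : ContDiff ℝ 1 v) (hq : 1 ≤ q) :
    ∫⁻ x, ‖v (x - u₁ x) - v (x - u₂ x)‖ₑ ^ q ≤
      ENNReal.ofReal (invDetBound d r) * (⨆ x, ‖u₁ x - u₂ x‖ₑ) ^ q *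
        ∫⁻ y, ‖fderiv ℝ v y‖ₑ ^ q := by
  have hX₁ : Measurable fun x => x - u₁ x := (continuous_id.sub hu₁.continuous).measurable
  have hX₂ : Measurable fun x => x - u₂ x := (continuous_id.sub hu₂.continuous).measurable
  have hdist (x) : ‖(x - u₁ x) - (x - u₂ x)‖ₑ = ‖u₁ x - u₂ x‖ₑ := by
    rw [sub_sub_sub_cancel_left, enorm_sub_rev]
  simpa only [hdist] using lintegral_rpow_enorm_comp_sub_comp_le hX₂ hX₁
    (fun s hs => map_lineMap_id_sub_le_invDetBound_smul hu₂ hu₁ hr hur₂ hur₁ hs) hv hq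

end CompositionDifference

theorem L2_diff_comp_characteristic_general {d m : ℕ} {q Δt L K : ℝ} (hq : 1 ≤ q) (hΔt : 0 ≤ Δt)
    (hΔtL : Δt * L < 1) (hK : invDetBound d (Δt * L) ≤ K)
    {w₁ w₂ : EuclideanSpace ℝ (Fin d) → EuclideanSpace ℝ (Fin d)}
    (hw₁ : Differentiable ℝ w₁) (hw₂ : Differentiable ℝ w₂)
    (hJ₁ : ∀ x, jacobianFrobeniusNorm w₁ x ≤ L) (hJ₂ : ∀ x, jacobianFrobeniusNorm w₂ x ≤ L)
    {v : EuclideanSpace ℝ (Fin d) → EuclideanSpace ℝ (Fin m)} (hv : ContDiff ℝ 1 v) :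
    (∫⁻ x, ‖v (x - Δt • w₁ x) - v (x - Δt • w₂ x)‖ₑ ^ q) ^ (1 / q) ≤
      ENNReal.ofReal (K ^ (1 / q) * Δt) * (⨆ x, ‖w₁ x - w₂ x‖ₑ) *
        (∫⁻ y, ENNReal.ofReal (jacobianFrobeniusNorm v y ^ q)) ^ (1 / q) := by
  have hq₀ : 0 < q := one_pos.trans_le hq
  have hJ {w : EuclideanSpace ℝ (Fin d) → EuclideanSpace ℝ (Fin d)}
      (hw : ∀ x, jacobianFrobeniusNorm w x ≤ L) (x) :
      jacobianFrobeniusNorm (Δt • w) x ≤ Δt * L := by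
    rw [jacobianFrobeniusNorm_const_smul, abs_of_nonneg hΔt]
    exact mul_le_mul_of_nonneg_left (hw x) hΔt
  have hK₀ : 0 ≤ K :=
    (invDetBound_nonneg d ((Real.sqrt_nonneg _).trans (hJ hJ₁ 0)) hΔtL).trans hK
  have hdist : (⨆ x, ‖(Δt • w₁) x - (Δt • w₂) x‖ₑ) =
      ENNReal.ofReal Δt * ⨆ x, ‖w₁ x - w₂ x‖ₑ := by
    simp only [Pi.smul_apply, ← smul_sub, enorm_smul, Real.enorm_of_nonneg hΔt, ENNReal.mul_iSup]
  have hDv (y) : ‖fderiv ℝ v y‖ₑ ^ q ≤ ENNReal.ofReal (jacobianFrobeniusNorm v y ^ q) := by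
    rw [← ofReal_norm, ENNReal.ofReal_rpow_of_nonneg (norm_nonneg _) hq₀.le]
    gcongr
    exact norm_fderiv_le_jacobianFrobeniusNorm
  calc (∫⁻ x, ‖v (x - Δt • w₁ x) - v (x - Δt • w₂ x)‖ₑ ^ q) ^ (1 / q)
      ≤ (ENNReal.ofReal (invDetBound d (Δt * L)) *
          (⨆ x, ‖(Δt • w₁) x - (Δt • w₂) x‖ₑ) ^ q * ∫⁻ y, ‖fderiv ℝ v y‖ₑ ^ q) ^ (1 / q) := by
        gcongr
        exact lintegral_rpow_enorm_comp_id_sub_sub_comp_id_sub_le (hw₁.const_smul Δt)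
          (hw₂.const_smul Δt) hΔtL (hJ hJ₁) (hJ hJ₂) hv hq
    _ ≤ (ENNReal.ofReal K * (ENNReal.ofReal Δt * ⨆ x, ‖w₁ x - w₂ x‖ₑ) ^ q *
          ∫⁻ y, ENNReal.ofReal (jacobianFrobeniusNorm v y ^ q)) ^ (1 / q) := by
        rw [hdist]
        gcongr with y
        exact hDv y
    _ = _ := by
        rw [ENNReal.mul_rpow_of_nonneg _ _ (by positivity),
          ENNReal.mul_rpow_of_nonneg _ _ (by positivity), ← ENNReal.rpow_mul _ q,
          mul_one_div_cancel hq₀.ne', ENNReal.rpow_one,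
          ENNReal.ofReal_rpow_of_nonneg hK₀ (by positivity), ← mul_assoc,
          ← ENNReal.ofReal_mul (by positivity)]

/-- `L²` estimate for the difference of compositions with two approximate
characteristic maps `x ↦ x - Δt·wᵢ(x)`. -/
theorem L2_diff_comp_characteristic (d m : ℕ) (hd : d = 2 ∨ d = 3)
    (Δt L : ℝ) (hΔt : 0 < Δt) (hL : 0 ≤ L) (hΔtL : Δt * L ≤ 1 / 4)
    (w₁ w₂ : EuclideanSpace ℝ (Fin d) → EuclideanSpace ℝ (Fin d))
    (hw₁ : Differentiable ℝ w₁) (hw₂ : Differentiable ℝ w₂)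
    (hJ₁ : ∀ x, jacobianFrobeniusNorm w₁ x ≤ L)
    (hJ₂ : ∀ x, jacobianFrobeniusNorm w₂ x ≤ L)
    (v : EuclideanSpace ℝ (Fin d) → EuclideanSpace ℝ (Fin m))
    (hv : ContDiff ℝ 1 v) (hvsupp : HasCompactSupport v) :
    (∫⁻ x, (‖v (x - Δt • w₁ x) - v (x - Δt • w₂ x)‖₊ : ENNReal) ^ 2) ^ (1 / 2 : ℝ) ≤
      ENNReal.ofReal (Real.sqrt 2 * Δt) * (⨆ x, (‖w₁ x - w₂ x‖₊ : ENNReal)) *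
        (∫⁻ y, ENNReal.ofReal ((jacobianFrobeniusNorm v y) ^ 2)) ^ (1 / 2 : ℝ) := by
  have hK : invDetBound d (Δt * L) ≤ 2 := invDetBound_le_two (by omega) (by positivity) hΔtL
  simpa [Real.sqrt_eq_rpow, enorm] using L2_diff_comp_characteristic_general one_le_two hΔt.le
    (hΔtL.trans_lt (by norm_num)) hK hw₁ hw₂ hJ₁ hJ₂ hv
end
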